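/- Let Q be the optimal Q-function for reward r, and let Q̄ : S × A → ℝ be an ε-optimal estimate, i.e. |Q(s,a) − Q̄(s,a)| ≤ ε for all (s,a), where ε ≥ 0. Let f : ℝ → ℝ be L-Lipschitz (|f(x)−f(y)| ≤ L·|x−y| for all x,y, with L ≥ 0) and satisfy: (1) f is convex; (2i) f(x+y) ≤ f(x) + f(y) for all x, y; (2ii) f(γx) ≤ γ·f(x) for all x. Define V̄_f(s) = max_{a∈A} f(Q̄(s,a)) and let C̄ be the optimal Q-function for reward r̄_C(s,a) = f(r(s,a)) + γ·∑_{s'} p(s'|s,a)·V̄_f(s') − f(Q̄(s,a)). If Q̃ is the optimal Q-function for the transformed reward (s,a) ↦ f(r(s,a)), then for all (s,a): f(Q̄(s,a)) − L·ε ≤ Q̃(s,a) ≤ f(Q̄(s,a)) + C̄(s,a) + (2/(1−γ))·L·ε. -/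

import Mathlib

/-!
Absorb the discount into the kernel, `k = γ p`, whose rows then have mass less than one. At a
maximum point of `u - v`, where `u` is a subsolution and `v` a supersolution of the same Bellman
equation, the value `M` of the maximum satisfies `M ≤ (∑ k) M`, so `M ≤ 0` and `u ≤ v`. Both
bounds compare `Q̃` with something explicit. By subadditivity and Jensen's inequality `f ∘ Q` is a
subsolution of the equation of `Q̃`, and the Lipschitz condition replaces `Q` by `Q̄`. The reward
defining `C̄` is the Bellman residual of `f ∘ Q̄`, which makes `f ∘ Q̄ + C̄` a supersolution
because a maximum of sums is at most the sum of the maxima; hence the upper bound holds even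
without its error term.
-/

open Finset

/-- Maximum of a real-valued function over a nonempty finite action set. -/
noncomputable def amax {A : Type*} [Fintype A] [Nonempty A] (g : A → ℝ) : ℝ :=
  Finset.univ.sup' Finset.univ_nonempty g

section Maximum

variable {A : Type*} [Fintype A] [Nonempty A]

theorem le_amax (g : A → ℝ) (a : A) : g a ≤ amax g :=
  le_sup' g (mem_univ a)

theorem amax_le {g : A → ℝ} {c : ℝ} (h : ∀ a, g a ≤ c) : amax g ≤ c :=
  sup'_le _ _ fun a _ => h a

theorem amax_add_le (g h : A → ℝ) : amax (g + h) ≤ amax g + amax h :=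
  amax_le fun a => add_le_add (le_amax g a) (le_amax h a)

theorem map_amax_le (f : ℝ → ℝ) (g : A → ℝ) : f (amax g) ≤ amax (f ∘ g) := by
  -- Attainment of the maximum takes the place of monotonicity of `f`.
  obtain ⟨a, -, ha⟩ := exists_mem_eq_sup' univ_nonempty g
  exact (congrArg f ha).trans_le (le_amax (f ∘ g) a)

end Maximum

theorem convexOn_map_sum_le_of_sum_le_one {ι E : Type*} [AddCommGroup E] [Module ℝ E]
    {D : Set E} {f : E → ℝ} (hf : ConvexOn ℝ D f) (h0 : 0 ∈ D) (hf0 : f 0 ≤ 0)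
    {t : Finset ι} {w : ι → ℝ} {x : ι → E} (hw : ∀ i ∈ t, 0 ≤ w i) (hw_sum : ∑ i ∈ t, w i ≤ 1)
    (hx : ∀ i ∈ t, x i ∈ D) :
    f (∑ i ∈ t, w i • x i) ≤ ∑ i ∈ t, w i • f (x i) := by
  -- Place the missing mass at the origin.
  have hmass : 0 ≤ 1 - ∑ i ∈ t, w i := sub_nonneg.2 hw_sum
  have hjensen := hf.map_add_sum_le hw (sub_add_cancel 1 _) hx hmass h0
  rw [smul_zero, zero_add, smul_eq_mul] at hjensen
  linarith [mul_nonpos_of_nonneg_of_nonpos hmass hf0]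

section Bellman

variable {S A : Type*} [Fintype S] [Fintype A] [Nonempty A]

/-- The discounted expected value `∑ s', k s a s' * max_{a'} u s' a'` of continuing greedily with
respect to `u` after playing `a` in `s`. The discount is part of the kernel, `k = γ p` in the
usual case, so that the optimal Q-function for the reward `R` is the solution `u` of
`u = R + continuationValue k u`. -/
noncomputable def continuationValue (k : S → A → S → ℝ) (u : S → A → ℝ) : S → A → ℝ :=
  fun s a => ∑ s', k s a s' * amax (u s')

theorem continuationValue_const_mul (γ : ℝ) (p : S → A → S → ℝ) (u : S → A → ℝ) (s : S) (a : A) :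
    continuationValue (fun s a s' => γ * p s a s') u s a = γ * ∑ s', p s a s' * amax (u s') := by
  simp only [continuationValue, mul_assoc, mul_sum]

theorem eq_add_continuationValue_const_mul_iff {γ : ℝ} {p : S → A → S → ℝ} {R u : S → A → ℝ} :
    u = R + continuationValue (fun s a s' => γ * p s a s') u ↔
      ∀ s a, u s a = R s a + γ * ∑ s', p s a s' * amax (u s') := by
  simp only [funext_iff, Pi.add_apply, continuationValue_const_mul]

variable {k : S → A → S → ℝ}

theorem continuationValue_add_le (hk : ∀ s a s', 0 ≤ k s a s') (u v : S → A → ℝ) :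
    continuationValue k (u + v) ≤ continuationValue k u + continuationValue k v := fun s a =>
  calc ∑ s', k s a s' * amax (u s' + v s')
    _ ≤ ∑ s', k s a s' * (amax (u s') + amax (v s')) :=
      sum_le_sum fun s' _ => mul_le_mul_of_nonneg_left (amax_add_le _ _) (hk s a s')
    _ = continuationValue k u s a + continuationValue k v s a := by
      simp only [continuationValue, mul_add, sum_add_distrib]

theorem continuationValue_le_add_sum_mul (hk : ∀ s a s', 0 ≤ k s a s')
    {u v : S → A → ℝ} {c : ℝ} (h : ∀ s a, u s a ≤ v s a + c) (s : S) (a : A) :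
    continuationValue k u s a ≤ continuationValue k v s a + (∑ s', k s a s') * c :=
  calc ∑ s', k s a s' * amax (u s')
    _ ≤ ∑ s', k s a s' * (amax (v s') + c) :=
      sum_le_sum fun s' _ => mul_le_mul_of_nonneg_left
        (amax_le fun a' => (h s' a').trans (add_le_add_left (le_amax (v s') a') c)) (hk s a s')
    _ = continuationValue k v s a + (∑ s', k s a s') * c := by
      simp only [continuationValue, mul_add, sum_add_distrib, sum_mul]

theorem map_continuationValue_le (hk : ∀ s a s', 0 ≤ k s a s') {f : ℝ → ℝ}
    (hf_convex : ConvexOn ℝ Set.univ f) (hf_zero : f 0 ≤ 0) (u : S → A → ℝ) {s : S} {a : A}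
    (hk_sum : ∑ s', k s a s' ≤ 1) :
    f (continuationValue k u s a) ≤ continuationValue k (fun s => f ∘ u s) s a :=
  calc f (∑ s', k s a s' * amax (u s'))
    _ ≤ ∑ s', k s a s' * f (amax (u s')) :=
      convexOn_map_sum_le_of_sum_le_one hf_convex (Set.mem_univ 0) hf_zero
        (fun s' _ => hk s a s') hk_sum fun _ _ => Set.mem_univ _
    _ ≤ ∑ s', k s a s' * amax (f ∘ u s') :=
      sum_le_sum fun s' _ => mul_le_mul_of_nonneg_left (map_amax_le f (u s')) (hk s a s')

theorem le_of_bellman_subsolution_of_bellman_supersolution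
    (hk : ∀ s a s', 0 ≤ k s a s') (hk_sum : ∀ s a, ∑ s', k s a s' < 1)
    {R u v : S → A → ℝ} (hu : u ≤ R + continuationValue k u)
    (hv : R + continuationValue k v ≤ v) : u ≤ v := by
  intro s a
  have : Nonempty (S × A) := ⟨(s, a)⟩
  obtain ⟨⟨s₀, a₀⟩, hmax⟩ := Finite.exists_max fun x : S × A => u x.1 x.2 - v x.1 x.2
  set M := u s₀ a₀ - v s₀ a₀
  have hgap : ∀ s a, u s a ≤ v s a + M := fun s a => sub_le_iff_le_add'.1 (hmax (s, a))
  have hM_le : M ≤ (∑ s', k s₀ a₀ s') * M := by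
    have hu₀ : u s₀ a₀ ≤ R s₀ a₀ + continuationValue k u s₀ a₀ := hu s₀ a₀
    have hv₀ : R s₀ a₀ + continuationValue k v s₀ a₀ ≤ v s₀ a₀ := hv s₀ a₀
    linarith [continuationValue_le_add_sum_mul hk hgap s₀ a₀]
  have hM_nonpos : M ≤ 0 := by nlinarith [hk_sum s₀ a₀]
  linarith [hgap s a]

theorem map_optimal_le_optimal_map (hk : ∀ s a s', 0 ≤ k s a s')
    (hk_sum : ∀ s a, ∑ s', k s a s' < 1) {f : ℝ → ℝ}
    (hf_convex : ConvexOn ℝ Set.univ f) (hf_subadd : ∀ x y, f (x + y) ≤ f x + f y)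
    (hf_zero : f 0 ≤ 0) {r Q Qt : S → A → ℝ} (hQ : Q = r + continuationValue k Q)
    (hQt : Qt = (fun s => f ∘ r s) + continuationValue k Qt) :
    (fun s => f ∘ Q s) ≤ Qt := by
  refine le_of_bellman_subsolution_of_bellman_supersolution hk hk_sum (fun s a => ?_) hQt.ge
  calc f (Q s a)
    _ = f (r s a + continuationValue k Q s a) := congrArg f (congrFun₂ hQ s a)
    _ ≤ f (r s a) + f (continuationValue k Q s a) := hf_subadd _ _
    _ ≤ f (r s a) + continuationValue k (fun s => f ∘ Q s) s a := by
      gcongr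
      exact map_continuationValue_le hk hf_convex hf_zero Q (hk_sum s a).le

theorem optimal_le_add_optimal_residual (hk : ∀ s a s', 0 ≤ k s a s')
    (hk_sum : ∀ s a, ∑ s', k s a s' < 1) {R w C Qt : S → A → ℝ}
    (hC : C = R + continuationValue k w - w + continuationValue k C)
    (hQt : Qt = R + continuationValue k Qt) : Qt ≤ w + C := by
  refine le_of_bellman_subsolution_of_bellman_supersolution hk hk_sum hQt.le ?_
  calc R + continuationValue k (w + C)
    _ ≤ R + (continuationValue k w + continuationValue k C) := by
      gcongr
      exact continuationValue_add_le hk w C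
    _ = w + (R + continuationValue k w - w + continuationValue k C) := by abel
    _ = w + C := by rw [← hC]

theorem convex_conditions_error_prone_standard_rl_general
    (hk : ∀ s a s', 0 ≤ k s a s') (hk_sum : ∀ s a, ∑ s', k s a s' < 1)
    {r Q Qb C Qt : S → A → ℝ} {f : ℝ → ℝ} {L : NNReal} {ε : ℝ}
    (hQ : Q = r + continuationValue k Q) (hQb : ∀ s a, |Q s a - Qb s a| ≤ ε)
    (hf_lip : LipschitzWith L f) (hf_convex : ConvexOn ℝ Set.univ f)
    (hf_subadd : ∀ x y, f (x + y) ≤ f x + f y) (hf_zero : f 0 ≤ 0)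
    (hC : C = (fun s => f ∘ r s) + continuationValue k (fun s => f ∘ Qb s) - (fun s => f ∘ Qb s)
      + continuationValue k C)
    (hQt : Qt = (fun s => f ∘ r s) + continuationValue k Qt) (s : S) (a : A) :
    f (Qb s a) - L * ε ≤ Qt s a ∧ Qt s a ≤ f (Qb s a) + C s a := by
  have hlip : |f (Q s a) - f (Qb s a)| ≤ L * ε := hf_lip.dist_le_mul_of_le (hQb s a)
  have hlower : f (Q s a) ≤ Qt s a :=
    map_optimal_le_optimal_map hk hk_sum hf_convex hf_subadd hf_zero hQ hQt s a
  exact ⟨by linarith [neg_abs_le (f (Q s a) - f (Qb s a))],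
    optimal_le_add_optimal_residual hk hk_sum hC hQt s a⟩

end Bellman

/-- **Convex conditions with error-prone Q-values, standard RL (Lemma 4.1A).** -/
theorem convex_conditions_error_prone_standard_rl
    {S A : Type*} [Fintype S] [Fintype A] [Nonempty S] [Nonempty A]
    (p : S → A → S → ℝ)
    (hp_nonneg : ∀ s a s', 0 ≤ p s a s')
    (hp_sum : ∀ s a, ∑ s', p s a s' = 1)
    (γ : ℝ) (hγ0 : 0 < γ) (hγ1 : γ < 1)
    (r : S → A → ℝ)
    -- Q is the optimal Q-function for reward r
    (Q : S → A → ℝ)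
    (hQ : ∀ s a, Q s a = r s a + γ * ∑ s', p s a s' * amax (fun a' => Q s' a'))
    -- Q̄ is an ε-optimal estimate of Q
    (ε : ℝ) (hε : 0 ≤ ε)
    (Qb : S → A → ℝ)
    (hQb : ∀ s a, |Q s a - Qb s a| ≤ ε)
    -- the transformation function f : L-Lipschitz, and the convex conditions
    (f : ℝ → ℝ)
    (L : ℝ) (hL : 0 ≤ L)
    (hf_lip : ∀ x y, |f x - f y| ≤ L * |x - y|)
    (hf_convex : ConvexOn ℝ Set.univ f)
    (hf_subadd : ∀ x y, f (x + y) ≤ f x + f y)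
    (hf_subhom : ∀ x, f (γ * x) ≤ γ * f x)
    -- V̄_f, the auxiliary reward r̄_C, and C̄ the optimal Q-function for r̄_C
    (Vfb : S → ℝ)
    (hVfb : ∀ s, Vfb s = amax (fun a => f (Qb s a)))
    (rCb : S → A → ℝ)
    (hrCb : ∀ s a, rCb s a = f (r s a) + γ * (∑ s', p s a s' * Vfb s') - f (Qb s a))
    (Cb : S → A → ℝ)
    (hCb : ∀ s a, Cb s a = rCb s a + γ * ∑ s', p s a s' * amax (fun a' => Cb s' a'))
    -- Q̃ is the optimal Q-function for the transformed reward f ∘ r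
    (Qt : S → A → ℝ)
    (hQt : ∀ s a, Qt s a = f (r s a) + γ * ∑ s', p s a s' * amax (fun a' => Qt s' a')) :
    ∀ s a, f (Qb s a) - L * ε ≤ Qt s a ∧
      Qt s a ≤ f (Qb s a) + Cb s a + (2 / (1 - γ)) * L * ε := by
  intro s a
  have hk_sum : ∀ s a, ∑ s', γ * p s a s' < 1 := fun s a => by rwa [← mul_sum, hp_sum, mul_one]
  have hf_zero : f 0 ≤ 0 := by
    have := hf_subhom 0
    rw [mul_zero] at this
    nlinarith
  have hC : Cb = (fun s => f ∘ r s) + continuationValue (fun s a s' => γ * p s a s')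
      (fun s => f ∘ Qb s) - (fun s => f ∘ Qb s)
      + continuationValue (fun s a s' => γ * p s a s') Cb := by
    refine eq_add_continuationValue_const_mul_iff.2 fun s a => ?_
    simp only [hCb s a, hrCb, hVfb, Pi.add_apply, Pi.sub_apply, continuationValue_const_mul,
      Function.comp_def]
  have hbounds := convex_conditions_error_prone_standard_rl_general (L := ⟨L, hL⟩)
    (fun s a s' => mul_nonneg hγ0.le (hp_nonneg s a s')) hk_sum
    (eq_add_continuationValue_const_mul_iff.2 hQ) hQb (.of_dist_le_mul hf_lip) hf_convex
    hf_subadd hf_zero hC (eq_add_continuationValue_const_mul_iff.2 hQt) s a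
  have hslack : 0 ≤ 2 / (1 - γ) * L * ε := by
    have := sub_pos.2 hγ1
    positivity
  exact hbounds.imp_right fun h => h.trans (le_add_of_nonneg_right hslack)
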